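/- arXiv:2409.07854 — 3 statements merged into one kernel-verified Lean document; each statement's English description precedes it below -/
import Mathlib

section
/- Let f be a polynomial in ℂ[x,y₁,y₂] that is weighted-homogeneous of degree 10 with respect to the weights (1,2,2) assigned to (x,y₁,y₂). Consider the quotient ring R = ℂ[x,y₁,y₂,z]/(z²−f), graded by assigning weights (1,2,2,5) to (x,y₁,y₂,z). Then for every integer m ≥ 1, the ℂ-dimension of the degree-m graded piece of R equals 2 + m²/4 if m is even, and 1 + (m²−1)/4 if m is odd. -/
open MvPolynomial

/-!
Modulo `z² - f` every polynomial can be written uniquely as `a + z b` with `a, b ∈ ℂ[x, y₁, y₂]`: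
powers of `z` are lowered two at a time by `z² = f` (`reduce_mem_range`), and uniqueness holds
because `z² - f` is monic of degree two in `z` (`normalFormMap_injective`). Since `f` has degree
`10 = 2 · 5`, the reduction preserves the weighted degree, so the degree-`m` piece of the quotient
is isomorphic to the direct sum of the degree-`m` and the degree-`(m - 5)` pieces of
`ℂ[x, y₁, y₂]`. The degree-`n` piece of `ℂ[x, y₁, y₂]` has a basis of monomials, one for each pair
of exponents of `y₁, y₂` with sum at most `n / 2` (`card_weights`), and adding the two triangular
numbers gives the formula.
-/

/-- The polynomials in `ℂ[x, y₁, y₂]`, with weights `(1, 2, 2)`, that are homogeneous of degree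
`m - c`. The degree condition is written additively, so that the piece is zero when `m < c`. -/
noncomputable abbrev shiftedPiece (c m : ℕ) : Submodule ℂ (MvPolynomial (Fin 3) ℂ) :=
  restrictSupport ℂ {d | Finsupp.weight (![1, 2, 2] : Fin 3 → ℕ) d + c = m}

lemma weight_three (d : Fin 3 →₀ ℕ) :
    Finsupp.weight (![1, 2, 2] : Fin 3 → ℕ) d = d 0 + 2 * d 1 + 2 * d 2 := by
  rw [Finsupp.weight_apply, Finsupp.sum_fintype _ _ (by simp), Fin.sum_univ_three]
  simp [mul_comm]

lemma weight_four (d : Fin 4 →₀ ℕ) :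
    Finsupp.weight (![1, 2, 2, 5] : Fin 4 → ℕ) d = d 0 + 2 * d 1 + 2 * d 2 + 5 * d 3 := by
  rw [Finsupp.weight_apply, Finsupp.sum_fintype _ _ (by simp), Fin.sum_univ_four]
  simp [mul_comm]

/-- A monomial `x ^ i y₁ ^ j y₂ ^ k` of degree `n` is determined by `j + k ≤ n / 2` and `j`. -/
noncomputable def weightsEquiv (n : ℕ) :
    {d : Fin 3 →₀ ℕ // Finsupp.weight (![1, 2, 2] : Fin 3 → ℕ) d = n} ≃
      (Σ s : Fin (n / 2 + 1), Fin (s.1 + 1)) where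
  toFun d := ⟨⟨d.1 1 + d.1 2, by have := d.2; rw [weight_three] at this; omega⟩,
    ⟨d.1 1, by simp only; omega⟩⟩
  invFun p := ⟨Finsupp.equivFunOnFinite.symm ![n - 2 * p.1.1, p.2.1, p.1.1 - p.2.1], by
    have h1 := p.1.2
    have h2 := p.2.2
    rw [weight_three]
    simp
    omega⟩
  left_inv d := by
    have h := d.2
    rw [weight_three] at h
    ext i
    fin_cases i <;> simp
    omega
  right_inv p := by
    obtain ⟨⟨s, hs⟩, ⟨j, hj⟩⟩ := p
    simp only at hj
    have : j + (s - j) = s := by omega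
    simp only [Finsupp.equivFunOnFinite_symm_apply_apply, Matrix.cons_val_zero,
      Matrix.cons_val_one]
    congr! 1
    · exact Fin.ext this
    · congr! 2

lemma card_weights (n : ℕ) :
    Nat.card {d : Fin 3 →₀ ℕ // Finsupp.weight (![1, 2, 2] : Fin 3 → ℕ) d = n} * 2 =
      (n / 2 + 1) * (n / 2 + 2) := by
  rw [Nat.card_congr (weightsEquiv n), Nat.card_eq_fintype_card, Fintype.card_sigma]
  simp only [Fintype.card_fin]
  rw [Fin.sum_univ_eq_sum_range (fun i => i + 1)]
  have := Finset.sum_range_id_mul_two (n / 2 + 2)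
  rw [Finset.sum_range_succ'] at this
  simp only [add_zero] at this
  rw [this]
  simp [mul_comm]

instance finite_weights (n : ℕ) :
    Finite {d : Fin 3 →₀ ℕ // Finsupp.weight (![1, 2, 2] : Fin 3 → ℕ) d = n} :=
  Finite.of_equiv _ (weightsEquiv n).symm

instance finite_shifted (c m : ℕ) :
    Finite {d : Fin 3 →₀ ℕ | Finsupp.weight (![1, 2, 2] : Fin 3 → ℕ) d + c = m} := by
  refine Finite.of_injective
    (β := {d : Fin 3 →₀ ℕ // Finsupp.weight (![1, 2, 2] : Fin 3 → ℕ) d = m - c})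
    (fun d => ⟨d.1, by have := d.2; simp only [Set.mem_ofPred_eq] at this; omega⟩) ?_
  intro a b h
  simpa [Subtype.ext_iff] using h

instance finite_shiftedPiece (c m : ℕ) : Module.Finite ℂ (shiftedPiece c m) :=
  Module.Finite.of_basis (basisRestrictSupport ℂ _)

lemma finrank_shiftedPiece (c m : ℕ) (h : c ≤ m) :
    Module.finrank ℂ (shiftedPiece c m) * 2 = ((m - c) / 2 + 1) * ((m - c) / 2 + 2) := by
  rw [Module.finrank_eq_nat_card_basis (basisRestrictSupport ℂ _), ← card_weights]
  congr 1
  exact Nat.card_congr (Equiv.subtypeEquivRight fun d => by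
    simp only [Set.mem_ofPred_eq]; omega)

lemma finrank_shiftedPiece_of_lt (c m : ℕ) (h : m < c) :
    Module.finrank ℂ (shiftedPiece c m) = 0 := by
  rw [Module.finrank_eq_nat_card_basis (basisRestrictSupport ℂ _)]
  have : IsEmpty {d : Fin 3 →₀ ℕ | Finsupp.weight (![1, 2, 2] : Fin 3 → ℕ) d + c = m} :=
    ⟨fun d => by have := d.2; simp only [Set.mem_ofPred_eq] at this; omega⟩
  exact Nat.card_of_isEmpty

/-- The ideal generated by `z² - f` in `ℂ[x, y₁, y₂, z]`. -/
noncomputable abbrev relIdeal (f : MvPolynomial (Fin 3) ℂ) : Ideal (MvPolynomial (Fin 4) ℂ) :=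
  Ideal.span {X 3 ^ 2 - rename Fin.castSucc f}

/-- The map `(a, b) ↦ a + z b` from the sum of the pieces of `ℂ[x, y₁, y₂]` of degrees `m` and
`m - 5` to the quotient `ℂ[x, y₁, y₂, z] / I`. -/
noncomputable def normalFormMap (I : Ideal (MvPolynomial (Fin 4) ℂ)) (m : ℕ) :
    (shiftedPiece 0 m × shiftedPiece 5 m) →ₗ[ℂ] (MvPolynomial (Fin 4) ℂ ⧸ I) :=
  (Ideal.Quotient.mkₐ ℂ I).toLinearMap ∘ₗ
    LinearMap.coprod
      ((rename Fin.castSucc : _ →ₐ[ℂ] MvPolynomial (Fin 4) ℂ).toLinearMap ∘ₗ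
        (shiftedPiece 0 m).subtype)
      (LinearMap.mulLeft ℂ (X 3) ∘ₗ
        (rename Fin.castSucc : _ →ₐ[ℂ] MvPolynomial (Fin 4) ℂ).toLinearMap ∘ₗ
        (shiftedPiece 5 m).subtype)

lemma normalFormMap_apply (I : Ideal (MvPolynomial (Fin 4) ℂ)) (m : ℕ)
    (p : shiftedPiece 0 m × shiftedPiece 5 m) :
    normalFormMap I m p = Ideal.Quotient.mk I
      (rename Fin.castSucc p.1.1 + X 3 * rename Fin.castSucc p.2.1) := rfl

/-- The identification of `ℂ[x, y₁, y₂, z]` with polynomials in `z` over `ℂ[x, y₁, y₂]`, used to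
measure degrees in `z`. -/
noncomputable def toPolyInZ :
    MvPolynomial (Fin 4) ℂ →ₐ[ℂ] Polynomial (MvPolynomial (Fin 3) ℂ) :=
  aeval (Fin.snoc (α := fun _ => Polynomial (MvPolynomial (Fin 3) ℂ))
    (fun i : Fin 3 => Polynomial.C (X i)) Polynomial.X)

lemma toPolyInZ_rename (a : MvPolynomial (Fin 3) ℂ) :
    toPolyInZ (rename Fin.castSucc a) = Polynomial.C a := by
  have : toPolyInZ.comp (rename Fin.castSucc) =
      (Polynomial.CAlgHom (R := ℂ) (A := MvPolynomial (Fin 3) ℂ)) := by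
    ext i : 1
    simp only [AlgHom.comp_apply, rename_X, toPolyInZ, aeval_X, Fin.snoc_castSucc]
    rfl
  exact DFunLike.congr_fun this a

lemma toPolyInZ_X : toPolyInZ (X 3) = Polynomial.X := by
  rw [toPolyInZ, aeval_X]
  exact Fin.snoc_last (α := fun _ => Polynomial (MvPolynomial (Fin 3) ℂ)) _ _

/-- A multiple of `z² - f`, which is monic in `z`, cannot have degree less than two in `z` unless
it vanishes. -/
lemma normalFormMap_injective (f : MvPolynomial (Fin 3) ℂ) (m : ℕ) :
    Function.Injective
      (normalFormMap (relIdeal f) m) := by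
  rw [← LinearMap.ker_eq_bot, LinearMap.ker_eq_bot']
  rintro ⟨⟨a, ha⟩, ⟨b, hb⟩⟩ h
  rw [normalFormMap_apply, Ideal.Quotient.eq_zero_iff_mem, Ideal.mem_span_singleton] at h
  have e1 : toPolyInZ (X 3 ^ 2 - rename Fin.castSucc f) = Polynomial.X ^ 2 - Polynomial.C f := by
    rw [map_sub, map_pow, toPolyInZ_rename]
    exact congrArg (fun p => p ^ 2 - Polynomial.C f) toPolyInZ_X
  have e2 : toPolyInZ (rename Fin.castSucc a + X 3 * rename Fin.castSucc b) =
      Polynomial.C a + Polynomial.X * Polynomial.C b := by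
    rw [map_add, map_mul, toPolyInZ_rename, toPolyInZ_rename]
    exact congrArg (fun p => Polynomial.C a + p * Polynomial.C b) toPolyInZ_X
  have h2 : Polynomial.X ^ 2 - Polynomial.C f ∣
      Polynomial.C a + Polynomial.X * Polynomial.C b := by
    rw [← e1, ← e2]
    exact map_dvd toPolyInZ h
  have h3 : Polynomial.C a + Polynomial.X * Polynomial.C b = 0 := by
    refine Polynomial.eq_zero_of_dvd_of_degree_lt h2 ?_
    rw [Polynomial.degree_X_pow_sub_C (by norm_num), add_comm, Polynomial.X_mul_C]
    exact lt_of_le_of_lt Polynomial.degree_linear_le (by norm_num)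
  have h0 := congrArg (fun p => Polynomial.coeff p 0) h3
  have h1 := congrArg (fun p => Polynomial.coeff p 1) h3
  simp [Polynomial.coeff_C] at h0 h1
  subst h0 h1
  rfl

/-- Rewriting `z² = f` lowers `a z ^ k` to the form `a' + z b'` without changing its degree. -/
lemma reduce_mem_range (f : MvPolynomial (Fin 3) ℂ)
    (hf : f ∈ weightedHomogeneousSubmodule ℂ ![1, 2, 2] 10) (m k : ℕ) :
    ∀ a ∈ shiftedPiece (5 * k) m,
      Ideal.Quotient.mk (relIdeal f)
        (rename Fin.castSucc a * X 3 ^ k) ∈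
      LinearMap.range (normalFormMap (relIdeal f) m) := by
  induction k using Nat.twoStepInduction with
  | zero =>
    intro a ha
    exact ⟨(⟨a, ha⟩, 0), by simp [normalFormMap_apply]⟩
  | one =>
    intro a ha
    exact ⟨(0, ⟨a, ha⟩), by simp [normalFormMap_apply, mul_comm]⟩
  | more k ih _ =>
    intro a ha
    have haf : a * f ∈ shiftedPiece (5 * k) m := by
      classical
      rw [mem_restrictSupport_iff] at ha ⊢
      intro d hd
      obtain ⟨u, hu, v, hv, rfl⟩ := Finset.mem_add.mp (support_mul a f hd)
      have h1 := ha hu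
      have h2 := hf (mem_support_iff.mp hv)
      simp only [Set.mem_ofPred_eq, map_add] at h1 ⊢
      omega
    convert ih _ haf using 1
    rw [Ideal.Quotient.eq, Ideal.mem_span_singleton]
    exact ⟨rename Fin.castSucc a * X 3 ^ k, by rw [map_mul]; ring⟩

/-- The exponents of `x, y₁, y₂` in a monomial in all four variables. -/
noncomputable def dropZ (d : Fin 4 →₀ ℕ) : Fin 3 →₀ ℕ :=
  Finsupp.equivFunOnFinite.symm fun i => d i.castSucc

lemma monomial_eq (d : Fin 4 →₀ ℕ) (r : ℂ) :
    monomial d r = rename Fin.castSucc (monomial (dropZ d) r) * X 3 ^ (d 3) := by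
  rw [rename_monomial, X_pow_eq_monomial, monomial_mul, mul_one]
  congr 2
  refine Finsupp.ext fun i => ?_
  rw [Finsupp.add_apply]
  induction i using Fin.lastCases with
  | last =>
    rw [Finsupp.mapDomain_of_notMem_range]
    · simp
    · rintro ⟨j, hj⟩
      exact absurd hj (Fin.castSucc_ne_last j)
  | cast j =>
    rw [Finsupp.mapDomain_apply (Fin.castSucc_injective 3), Finsupp.single_eq_of_ne]
    · simp [dropZ]
    · exact Fin.castSucc_ne_last j

lemma rename_mul_mem (m k : ℕ) (a : MvPolynomial (Fin 3) ℂ) (ha : a ∈ shiftedPiece (5 * k) m) :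
    rename Fin.castSucc a * X 3 ^ k ∈ weightedHomogeneousSubmodule ℂ ![1, 2, 2, 5] m := by
  rw [as_sum a, map_sum, Finset.sum_mul]
  refine Submodule.sum_mem _ fun d hd => ?_
  have h := ha hd
  simp only [Set.mem_ofPred_eq, weight_three] at h
  rw [rename_monomial, X_pow_eq_monomial, monomial_mul]
  refine isWeightedHomogeneous_monomial _ _ _ ?_
  have h0 := Finsupp.mapDomain_apply (Fin.castSucc_injective 3) d 0
  have h1 := Finsupp.mapDomain_apply (Fin.castSucc_injective 3) d 1
  have h2 := Finsupp.mapDomain_apply (Fin.castSucc_injective 3) d 2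
  have h3 : Finsupp.mapDomain Fin.castSucc d (3 : Fin 4) = 0 :=
    Finsupp.mapDomain_of_notMem_range _ _ (by
      rintro ⟨j, hj⟩
      exact absurd hj (Fin.castSucc_ne_last j))
  simp only [Fin.castSucc_zero, Fin.castSucc_one, Fin.reduceCastSucc] at h0 h1 h2
  rw [weight_four]
  simp [h0, h1, h2, h3]
  omega

lemma range_normalFormMap (f : MvPolynomial (Fin 3) ℂ)
    (hf : f ∈ weightedHomogeneousSubmodule ℂ ![1, 2, 2] 10) (m : ℕ) :
    Submodule.map (Ideal.Quotient.mkₐ ℂ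
        (relIdeal f)).toLinearMap
        (weightedHomogeneousSubmodule ℂ ![1, 2, 2, 5] m) =
      LinearMap.range (normalFormMap (relIdeal f) m) := by
  apply le_antisymm
  · rw [Submodule.map_le_iff_le_comap]
    intro p hp
    rw [as_sum p]
    refine Submodule.sum_mem _ fun d hd => ?_
    have h := hp (mem_support_iff.mp hd)
    rw [monomial_eq]
    refine reduce_mem_range f hf m (d 3) _ ?_
    rw [monomial_mem_restrictSupport]
    left
    rw [weight_four] at h
    simp only [Set.mem_ofPred_eq, weight_three, dropZ, Finsupp.equivFunOnFinite_symm_apply_apply]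
    exact h
  · rintro _ ⟨⟨⟨a, ha⟩, ⟨b, hb⟩⟩, rfl⟩
    refine ⟨rename Fin.castSucc a + X 3 * rename Fin.castSucc b, ?_, rfl⟩
    refine Submodule.add_mem _ ?_ ?_
    · simpa using rename_mul_mem m 0 a ha
    · simpa [mul_comm] using rename_mul_mem m 1 b hb

/-- For `f` weighted-homogeneous of degree 10 in `ℂ[x,y₁,y₂]` with weights `(1,2,2)`,
the degree-`m` graded piece of `R = ℂ[x,y₁,y₂,z]/(z² - f)` (weights `(1,2,2,5)`) has
dimension `2 + m²/4` for `m` even and `1 + (m² - 1)/4` for `m` odd. -/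
theorem stmt_1
    (f : MvPolynomial (Fin 3) ℂ)
    (hf : f ∈ weightedHomogeneousSubmodule ℂ ![1, 2, 2] 10)
    (I : Ideal (MvPolynomial (Fin 4) ℂ))
    (hI : I = Ideal.span {X 3 ^ 2 - rename Fin.castSucc f})
    (m : ℕ) (hm : 1 ≤ m) :
    Module.finrank ℂ
      (Submodule.map (Ideal.Quotient.mkₐ ℂ I).toLinearMap
        (weightedHomogeneousSubmodule ℂ ![1, 2, 2, 5] m))
      = if Even m then 2 + m ^ 2 / 4 else 1 + (m ^ 2 - 1) / 4 := by
  subst hI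
  change Module.finrank ℂ (Submodule.map (Ideal.Quotient.mkₐ ℂ (relIdeal f)).toLinearMap _) = _
  rw [range_normalFormMap f hf m,
    LinearMap.finrank_range_of_inj (normalFormMap_injective f m), Module.finrank_prod]
  have hA := finrank_shiftedPiece 0 m (Nat.zero_le m)
  rcases lt_or_ge m 5 with h5 | h5
  · rw [finrank_shiftedPiece_of_lt 5 m h5]
    interval_cases m <;> simp [Nat.even_iff] at hA ⊢ <;> omega
  · have hB := finrank_shiftedPiece 5 m h5
    generalize Module.finrank ℂ (shiftedPiece 0 m) = A at *
    generalize Module.finrank ℂ (shiftedPiece 5 m) = B at *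
    rcases Nat.even_or_odd' m with ⟨k, rfl | rfl⟩
    · obtain ⟨j, rfl⟩ : ∃ j, k = j + 3 := ⟨k - 3, by omega⟩
      have e1 : (2 * (j + 3) - 0) / 2 = j + 3 := by omega
      have e2 : (2 * (j + 3) - 5) / 2 = j := by omega
      have e3 : (2 * (j + 3)) ^ 2 / 4 = (j + 3) ^ 2 := by
        rw [mul_pow]; omega
      rw [e1] at hA
      rw [e2] at hB
      rw [if_pos (even_two_mul _), e3]
      nlinarith
    · obtain ⟨j, rfl⟩ : ∃ j, k = j + 2 := ⟨k - 2, by omega⟩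
      have e1 : (2 * (j + 2) + 1 - 0) / 2 = j + 2 := by omega
      have e2 : (2 * (j + 2) + 1 - 5) / 2 = j := by omega
      have e3 : ((2 * (j + 2) + 1) ^ 2 - 1) / 4 = (j + 2) * (j + 3) := by
        have : (2 * (j + 2) + 1) ^ 2 = 4 * ((j + 2) * (j + 3)) + 1 := by ring
        omega
      rw [e1] at hA
      rw [e2] at hB
      rw [if_neg (by simp), e3]
      nlinarith
end

section
/- Fix λ ∈ ℂ with λ ≠ 0, and arbitrary polynomials g ∈ ℂ[X₁,X₂,X₃,X₄] and k ∈ ℂ[X₁,X₂,X₃]. In the polynomial ring A = ℂ[x₀,x,y,w,v,z,u], write G = g(x₀,y,w,v) and K = k(x₀,x,v), and let I_λ ⊆ A be the ideal generated by the nine polynomials λw−xy, λv−xw, λu−xz, yv−w², yu−wz, wu−vz (the 2×2 minors of the matrix with rows (λ,y,w,z) and (x,w,v,u)), together with z²−yG−λ²K, zu−wG−λxK, u²−vG−x²K. Let φ: A → B = ℂ[x₀,x,y,z] be the ℂ-algebra homomorphism fixing x₀,x,y,z and sending w ↦ λ⁻¹xy, v ↦ λ⁻²x²y, u ↦ λ⁻¹xz,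 and set f = z² − y·g(x₀, y, λ⁻¹xy, λ⁻²x²y) − λ²·k(x₀, x, λ⁻²x²y) ∈ B. Then φ⁻¹((f)) = I_λ, and consequently A/I_λ is isomorphic as a ℂ-algebra to B/(f). -/
/-!
Since `λ` is invertible, the first three minors let one solve for `w`, `v`, `u` in terms of
`x₀, x, y, z`. Let `σ : B → A` be the inclusion of `ℂ[x₀,x,y,z]`, so that `φ ∘ σ = id`.

* `φ` kills the six minors, sends `F = z² - yG - λ²K` to `f`, and sends the last two generators
  to `λ⁻¹x f` and `λ⁻²x² f`; hence `I ⊆ φ⁻¹((f))`.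
* Modulo `I`, the endomorphism `σ ∘ φ` is the identity, because it is so on variables. Hence
  `σ f = σ (φ F) ≡ F ≡ 0` modulo `I`, and if `φ p ∈ (f)` then `p ≡ σ (φ p) ≡ 0` modulo `I`.

The isomorphism is the first isomorphism theorem for the surjection `A → B → B/(f)`, whose kernel
is `φ⁻¹((f)) = I`.
-/

open MvPolynomial

/-- Elimination of variables in the family smoothing type-B I-surfaces.
In `A = ℂ[x₀,x,y,w,v,z,u]` (variables `X 0,…,X 6` of `Fin 7`), with `λ ≠ 0`,
`G = g(x₀,y,w,v)` and `K = k(x₀,x,v)`, and `I_λ` the ideal generated by the 2×2 minors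
of `(λ y w z; x w v u)` together with `z²-yG-λ²K`, `zu-wG-λxK`, `u²-vG-x²K`,
the map `φ : A → B = ℂ[x₀,x,y,z]` fixing `x₀,x,y,z` and sending
`w ↦ λ⁻¹xy, v ↦ λ⁻²x²y, u ↦ λ⁻¹xz` satisfies `φ⁻¹((f)) = I_λ`, where
`f = z² - y·g(x₀,y,λ⁻¹xy,λ⁻²x²y) - λ²·k(x₀,x,λ⁻²x²y)`; consequently
`A/I_λ ≅ B/(f)` as `ℂ`-algebras. -/
theorem stmt_7
    (lam : ℂ) (hlam : lam ≠ 0)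
    (g : MvPolynomial (Fin 4) ℂ) (k : MvPolynomial (Fin 3) ℂ)
    (G K : MvPolynomial (Fin 7) ℂ)
    (hG : G = aeval ![X 0, X 2, X 3, X 4] g)
    (hK : K = aeval ![X 0, X 1, X 4] k)
    (I : Ideal (MvPolynomial (Fin 7) ℂ))
    (hI : I = Ideal.span
      {C lam * X 3 - X 1 * X 2, C lam * X 4 - X 1 * X 3, C lam * X 6 - X 1 * X 5,
       X 2 * X 4 - X 3 ^ 2, X 2 * X 6 - X 3 * X 5, X 3 * X 6 - X 4 * X 5,
       X 5 ^ 2 - X 2 * G - C (lam ^ 2) * K,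
       X 5 * X 6 - X 3 * G - C lam * X 1 * K,
       X 6 ^ 2 - X 4 * G - X 1 ^ 2 * K})
    (φ : MvPolynomial (Fin 7) ℂ →ₐ[ℂ] MvPolynomial (Fin 4) ℂ)
    (hφ : φ = aeval ![X 0, X 1, X 2, C lam⁻¹ * (X 1 * X 2),
      C (lam⁻¹ ^ 2) * (X 1 ^ 2 * X 2), X 3, C lam⁻¹ * (X 1 * X 3)])
    (f : MvPolynomial (Fin 4) ℂ)
    (hf : f = X 3 ^ 2
      - X 2 * aeval ![X 0, X 2, C lam⁻¹ * (X 1 * X 2), C (lam⁻¹ ^ 2) * (X 1 ^ 2 * X 2)] g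
      - C (lam ^ 2) * aeval ![X 0, X 1, C (lam⁻¹ ^ 2) * (X 1 ^ 2 * X 2)] k) :
    Ideal.comap φ (Ideal.span {f}) = I ∧
      Nonempty ((MvPolynomial (Fin 7) ℂ ⧸ I) ≃ₐ[ℂ]
        (MvPolynomial (Fin 4) ℂ ⧸ Ideal.span {f})) := by
  have hc : (C lam⁻¹ : MvPolynomial (Fin 4) ℂ) * C lam = 1 := by
    rw [← C_mul, inv_mul_cancel₀ hlam, C_1]
  have hc' : (C lam⁻¹ : MvPolynomial (Fin 7) ℂ) * C lam = 1 := by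
    rw [← C_mul, inv_mul_cancel₀ hlam, C_1]
  have hφC (a : ℂ) : φ (C a) = C a := φ.commutes a
  have h0 : φ (X 0) = X 0 := by simp [hφ]
  have h1 : φ (X 1) = X 1 := by simp [hφ]
  have h2 : φ (X 2) = X 2 := by simp [hφ]
  have h3 : φ (X 3) = C lam⁻¹ * (X 1 * X 2) := by simp [hφ]
  have h4 : φ (X 4) = C (lam⁻¹ ^ 2) * (X 1 ^ 2 * X 2) := by simp [hφ]
  have h5 : φ (X 5) = X 3 := by simp [hφ]
  have h6 : φ (X 6) = C lam⁻¹ * (X 1 * X 3) := by simp [hφ]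
  have hφG : φ G = aeval ![X 0, X 2, C lam⁻¹ * (X 1 * X 2),
      C (lam⁻¹ ^ 2) * (X 1 ^ 2 * X 2)] g := by
    rw [hG, ← AlgHom.comp_apply, comp_aeval]
    congr 2
    funext i
    fin_cases i
    exacts [h0, h2, h3, h4]
  have hφK : φ K = aeval ![X 0, X 1, C (lam⁻¹ ^ 2) * (X 1 ^ 2 * X 2)] k := by
    rw [hK, ← AlgHom.comp_apply, comp_aeval]
    congr 2
    funext i
    fin_cases i
    exacts [h0, h1, h4]
  rw [← hφG, ← hφK] at hf
  have hle : I ≤ Ideal.comap φ (Ideal.span {f}) := by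
    rw [hI, Ideal.span_le]
    -- Each generator maps to an explicit multiple of `f`; the minors map to `0`.
    rintro p (rfl | rfl | rfl | rfl | rfl | rfl | rfl | rfl | rfl) <;>
      simp only [SetLike.mem_coe, Ideal.mem_comap, Ideal.mem_span_singleton', map_sub, map_mul,
        map_pow, hφC, h1, h2, h3, h4, h5, h6, hf]
    · exact ⟨0, by linear_combination (-X 1 * X 2) * hc⟩
    · exact ⟨0, by linear_combination (-C lam⁻¹ * X 1 ^ 2 * X 2) * hc⟩
    · exact ⟨0, by linear_combination (-X 1 * X 3) * hc⟩
    · exact ⟨0, by ring⟩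
    · exact ⟨0, by ring⟩
    · exact ⟨0, by ring⟩
    · exact ⟨1, by ring⟩
    · exact ⟨C lam⁻¹ * X 1, by linear_combination (-C lam * X 1 * φ K) * hc⟩
    · exact ⟨C lam⁻¹ ^ 2 * X 1 ^ 2, by
        linear_combination (-X 1 ^ 2 * φ K * (C lam⁻¹ * C lam + 1)) * hc⟩
  have m1 : C lam * X 3 - X 1 * X 2 ∈ I := hI ▸ Ideal.subset_span (by simp)
  have m2 : C lam * X 4 - X 1 * X 3 ∈ I := hI ▸ Ideal.subset_span (by simp)
  have m3 : C lam * X 6 - X 1 * X 5 ∈ I := hI ▸ Ideal.subset_span (by simp)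
  have mF : X 5 ^ 2 - X 2 * G - C (lam ^ 2) * K ∈ I := hI ▸ Ideal.subset_span (by simp)
  obtain ⟨σ, hσ⟩ : ∃ σ : MvPolynomial (Fin 4) ℂ →ₐ[ℂ] MvPolynomial (Fin 7) ℂ,
    σ = aeval ![X 0, X 1, X 2, X 5] := ⟨_, rfl⟩
  have hσC (a : ℂ) : σ (C a) = C a := σ.commutes a
  have s0 : σ (X 0) = X 0 := by simp [hσ]
  have s1 : σ (X 1) = X 1 := by simp [hσ]
  have s2 : σ (X 2) = X 2 := by simp [hσ]
  have s3 : σ (X 3) = X 5 := by simp [hσ]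
  have hφσ : φ.comp σ = AlgHom.id ℂ _ := by
    apply MvPolynomial.algHom_ext
    intro i
    fin_cases i
    · exact (congrArg φ s0).trans h0
    · exact (congrArg φ s1).trans h1
    · exact (congrArg φ s2).trans h2
    · exact (congrArg φ s3).trans h5
  have hσφ : (Ideal.Quotient.mkₐ ℂ I).comp (σ.comp φ) = Ideal.Quotient.mkₐ ℂ I := by
    apply MvPolynomial.algHom_ext
    intro i
    refine (Ideal.Quotient.mk_eq_mk_iff_sub_mem _ _).2 ?_
    rw [← I.neg_mem_iff, neg_sub]
    change X i - σ (φ (X i)) ∈ I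
    fin_cases i <;> simp only [Fin.zero_eta, Fin.mk_one, Fin.reduceFinMk, h0, h1, h2, h3, h4, h5,
      h6, map_mul, map_pow, hσC, s0, s1, s2, s3, sub_self, I.zero_mem]
    · convert I.mul_mem_left (C lam⁻¹) m1 using 1
      linear_combination (-X 3) * hc'
    · convert I.add_mem (I.mul_mem_left (C lam⁻¹) m2)
        (I.mul_mem_left (C lam⁻¹ ^ 2 * X 1) m1) using 1
      linear_combination (-X 4 - C lam⁻¹ * X 1 * X 3) * hc'
    · convert I.mul_mem_left (C lam⁻¹) m3 using 1
      linear_combination (-X 6) * hc'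
  have hσφ' (p : MvPolynomial (Fin 7) ℂ) : σ (φ p) ∈ I ↔ p ∈ I := by
    have h : Ideal.Quotient.mk I (σ (φ p)) = Ideal.Quotient.mk I p := DFunLike.congr_fun hσφ p
    rw [← Ideal.Quotient.eq_zero_iff_mem, h, Ideal.Quotient.eq_zero_iff_mem]
  have hφF : φ (X 5 ^ 2 - X 2 * G - C (lam ^ 2) * K) = f := by
    rw [hf]
    simp only [map_sub, map_mul, map_pow, hφC, h2, h5]
  have hσf : σ f ∈ I := by rwa [← hφF, hσφ']
  have hcomap : Ideal.comap φ (Ideal.span {f}) = I := by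
    refine le_antisymm (fun p hp => ?_) hle
    obtain ⟨q, hq⟩ := Ideal.mem_span_singleton'.1 (Ideal.mem_comap.1 hp)
    rw [← hσφ', ← hq, map_mul]
    exact I.mul_mem_left _ hσf
  refine ⟨hcomap, ?_⟩
  have hsurj : Function.Surjective ((Ideal.Quotient.mkₐ ℂ (Ideal.span {f})).comp φ) :=
    (Ideal.Quotient.mkₐ_surjective ℂ _).comp fun b => ⟨σ b, DFunLike.congr_fun hφσ b⟩
  have hker : I = RingHom.ker ((Ideal.Quotient.mkₐ ℂ (Ideal.span {f})).comp φ) := by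
    rw [← hcomap]
    ext p
    exact (Ideal.Quotient.eq_zero_iff_mem (I := Ideal.span {f}) (a := φ p)).symm
  exact ⟨(Ideal.quotientEquivAlgOfEq ℂ hker).trans
    (Ideal.quotientKerAlgEquivOfSurjective hsurj)⟩
end

section
/- Let R and S be nontrivial commutative integral domains that are ℂ-algebras. Suppose σ₁, σ₂ ∈ R are linearly independent over ℂ and τ₁, τ₂ ∈ S are linearly independent over ℂ. Then the five elements (σ₁², 0), (σ₁σ₂, 0), (0, τ₁²), (0, τ₁τ₂), (σ₂², τ₂²) of the product ring R × S are linearly independent over ℂ. -/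
/-! Over `ℂ` a nonzero binary quadratic form splits into linear factors, so in a domain it cannot
vanish at a linearly independent pair (`quadratic_form_coeffs_eq_zero`). A linear relation among
the five elements of `R × S` gives, in its two components, vanishing quadratic forms in `σ₁, σ₂`
and in `τ₁, τ₂`, so all five coefficients are zero. -/

/-- The squares and the product of a linearly independent pair in a domain over `ℂ` are linearly
independent, since a nonzero binary quadratic form over `ℂ` is a product of linear forms. -/
lemma quadratic_form_coeffs_eq_zero {R : Type*} [CommRing R] [IsDomain R] [Algebra ℂ R] {x y : R}
    (h : LinearIndependent ℂ ![x, y]) {a b c : ℂ}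
    (habc : a • x ^ 2 + b • (x * y) + c • y ^ 2 = 0) : a = 0 ∧ b = 0 ∧ c = 0 := by
  rw [LinearIndependent.pair_iff] at h
  have hy : y ≠ 0 := by
    rintro rfl
    simpa using h 0 1 (by simp)
  by_cases ha : a = 0
  · subst ha
    have h1 : y * (b • x + c • y) = 0 := by
      rw [← habc]
      simp only [Algebra.smul_def, map_zero]
      ring
    exact ⟨rfl, h b c ((mul_eq_zero.mp h1).resolve_left hy)⟩
  · exfalso
    -- If `r` is a root of `a * t ^ 2 + b * t + c`, then `x - r * y` is a factor of the form.
    obtain ⟨r, hr⟩ : ∃ r : ℂ, a * (r * r) + b * r + c = 0 := by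
      obtain ⟨s, hs⟩ := IsAlgClosed.exists_pow_nat_eq (discrim a b c) (n := 2) (by norm_num)
      exact exists_quadratic_eq_zero ha ⟨s, by rw [← hs, sq]⟩
    have hc : c = -(a * (r * r) + b * r) := by linear_combination hr
    have h1 : ((1 : ℂ) • x + (-r) • y) * (a • x + (a * r + b) • y) = 0 := by
      rw [← habc, hc]
      simp only [Algebra.smul_def, map_neg, map_add, map_mul, map_one]
      ring
    rcases mul_eq_zero.mp h1 with h2 | h2
    · exact one_ne_zero (h _ _ h2).1
    · exact ha (h _ _ h2).1

/-- If `R, S` are nontrivial commutative integral domains which are `ℂ`-algebras,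
`σ₁, σ₂ ∈ R` are linearly independent over `ℂ` and `τ₁, τ₂ ∈ S` are linearly
independent over `ℂ`, then `(σ₁², 0), (σ₁σ₂, 0), (0, τ₁²), (0, τ₁τ₂), (σ₂², τ₂²)`
are linearly independent in `R × S` over `ℂ`. -/
theorem stmt_14 {R S : Type*} [CommRing R] [CommRing S] [IsDomain R] [IsDomain S]
    [Algebra ℂ R] [Algebra ℂ S]
    (σ₁ σ₂ : R) (τ₁ τ₂ : S)
    (hσ : LinearIndependent ℂ ![σ₁, σ₂])
    (hτ : LinearIndependent ℂ ![τ₁, τ₂]) :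
    LinearIndependent ℂ
      ![((σ₁ ^ 2, 0) : R × S), (σ₁ * σ₂, 0), (0, τ₁ ^ 2), (0, τ₁ * τ₂), (σ₂ ^ 2, τ₂ ^ 2)] := by
  rw [Fintype.linearIndependent_iff]
  intro g hg
  simp only [Fin.sum_univ_five, Prod.ext_iff] at hg
  obtain ⟨h1, h2⟩ := hg
  simp at h1 h2
  obtain ⟨h00, h01, h04⟩ := quadratic_form_coeffs_eq_zero hσ h1
  obtain ⟨h02, h03, -⟩ := quadratic_form_coeffs_eq_zero hτ h2
  intro i
  fin_cases i <;> assumption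
end
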